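/- Let p be an odd prime, G a group, and T a G-module that is finite free as a ℤ_p-module, such that H¹(G, T) is a finitely generated ℤ_p-module. Let N ⊆ H¹(G, T) be a saturated ℤ_p-submodule (i.e. N is the preimage of a ℚ_p-subspace under H¹(G,T) → H¹(G,T) ⊗_{ℤ_p} ℚ_p) whose image in H¹(G,T) ⊗_{ℤ_p} ℚ_p has dimension at least r. Then for every integer n ≥ 1, the image of N under the natural map H¹(G, T) → H¹(G, T/pⁿT) contains a free ℤ/pⁿ-submodule of rank r. -/

import Mathlib

open TensorProduct

section GroupCohomologyOne

variable {R : Type*} [CommRing R] {G : Type*} [Group G]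

/-- The `R`-module of 1-cocycles of `G` valued in `M`, for an action of `G` on `M` given by
`act : G → Module.End R M`. -/
def cocycles {M : Type*} [AddCommGroup M] [Module R M] (act : G → Module.End R M) :
    Submodule R (G → M) where
  carrier := {c | ∀ g h : G, c (g * h) = c g + act g (c h)}
  add_mem' := by
    intro a b ha hb g h
    simp only [Pi.add_apply, ha g h, hb g h, map_add]
    abel
  zero_mem' := by intro g h; simp
  smul_mem' := by
    intro r c hc g h
    simp only [Pi.smul_apply, hc g h, map_smul, smul_add]

/-- The coboundary map `M → (G → M)`, `x ↦ (g ↦ g•x − x)`. -/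
def dZero {M : Type*} [AddCommGroup M] [Module R M] (act : G → Module.End R M) :
    M →ₗ[R] (G → M) where
  toFun x g := act g x - x
  map_add' x y := by
    funext g
    simp only [map_add, Pi.add_apply]
    abel
  map_smul' r x := by
    funext g
    simp [map_smul, smul_sub]

/-- First group cohomology `H¹(G, M)`: 1-cocycles modulo 1-coboundaries. -/
abbrev H1 {M : Type*} [AddCommGroup M] [Module R M] (act : G → Module.End R M) :=
  cocycles act ⧸ (Submodule.comap (cocycles act).subtype (LinearMap.range (dZero act)))

/-- Functoriality of 1-cocycles along an equivariant map. -/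
def cocyclesMap {M M' : Type*} [AddCommGroup M] [Module R M] [AddCommGroup M'] [Module R M']
    (act : G → Module.End R M) (act' : G → Module.End R M') (f : M →ₗ[R] M')
    (hf : ∀ g : G, f ∘ₗ (act g : M →ₗ[R] M) = (act' g : M' →ₗ[R] M') ∘ₗ f) :
    cocycles act →ₗ[R] cocycles act' :=
  (LinearMap.compLeft f G).restrict (p := cocycles act) (q := cocycles act') (by
    intro c hc g h
    have h2 : f ((act g) (c h)) = (act' g) (f (c h)) := by
      have := congrArg (fun φ : M →ₗ[R] M' => φ (c h)) (hf g)
      simpa using this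
    simp only [LinearMap.compLeft_apply, Function.comp_apply, hc g h, map_add, h2])

/-- Functoriality of `H¹` along an equivariant map. -/
def H1map {M M' : Type*} [AddCommGroup M] [Module R M] [AddCommGroup M'] [Module R M']
    (act : G → Module.End R M) (act' : G → Module.End R M') (f : M →ₗ[R] M')
    (hf : ∀ g : G, f ∘ₗ (act g : M →ₗ[R] M) = (act' g : M' →ₗ[R] M') ∘ₗ f) :
    H1 act →ₗ[R] H1 act' :=
  Submodule.mapQ _ _ (cocyclesMap act act' f hf) (by
    rintro ⟨c, hc⟩ ⟨x, hx⟩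
    refine ⟨f x, ?_⟩
    funext g
    show (act' g) (f x) - f x = f (c g)
    have hxg : (act g) x - x = c g := congrFun hx g
    have h2 : f ((act g) x) = (act' g) (f x) := by
      have := congrArg (fun φ : M →ₗ[R] M' => φ x) (hf g)
      simpa using this
    rw [← hxg, map_sub, h2])

/-- The submodule `a•M` of all multiples of `a` in `M`. -/
def smulTop (a : R) (M : Type*) [AddCommGroup M] [Module R M] : Submodule R M :=
  LinearMap.range (a • (LinearMap.id : M →ₗ[R] M))

theorem smulTop_le_comap (a : R) {M : Type*} [AddCommGroup M] [Module R M] (f : M →ₗ[R] M) :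
    smulTop a M ≤ (smulTop a M).comap f := by
  rintro x ⟨y, rfl⟩
  exact ⟨f y, by simp⟩

/-- The endomorphism of `M/aM` induced by an endomorphism of `M`. -/
def quotEnd (a : R) {M : Type*} [AddCommGroup M] [Module R M] (f : M →ₗ[R] M) :
    Module.End R (M ⧸ smulTop a M) :=
  Submodule.mapQ _ _ f (smulTop_le_comap a f)

/-- The reduction map `H¹(G, M) → H¹(G, M/aM)` induced by the projection `M → M/aM`. -/
def H1red (a : R) {M : Type*} [AddCommGroup M] [Module R M] (act : G → Module.End R M) :
    H1 act →ₗ[R] H1 (fun g : G => quotEnd a (act g)) :=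
  H1map act (fun g : G => quotEnd a (act g)) (smulTop a M).mkQ (fun g =>
    (Submodule.mapQ_mkQ (smulTop a M) (smulTop a M) (act g)).symm)

end GroupCohomologyOne

/-- If multiplication by `a` is injective on `M`, a class in `H¹(G, M)` which vanishes in
`H¹(G, M/aM)` is a multiple of `a`. -/
theorem exists_smul_eq_of_H1red_eq_zero {R : Type*} [CommRing R] {G : Type*} [Group G]
    {M : Type*} [AddCommGroup M] [Module R M] (ρ : G →* Module.End R M) (a : R)
    (ha : Function.Injective (fun x : M => a • x)) (z : H1 (fun g : G => ρ g))
    (hz : H1red a (fun g : G => ρ g) z = 0) :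
    ∃ y : H1 (fun g : G => ρ g), z = a • y := by
  obtain ⟨c, rfl⟩ := Submodule.mkQ_surjective _ z
  have hz' : Submodule.Quotient.mk (p := Submodule.comap
      (cocycles (fun g : G => quotEnd a (ρ g))).subtype
      (LinearMap.range (dZero (fun g : G => quotEnd a (ρ g)))))
      (cocyclesMap (fun g : G => ρ g) (fun g : G => quotEnd a (ρ g)) (smulTop a M).mkQ (fun g =>
        (Submodule.mapQ_mkQ (smulTop a M) (smulTop a M) (ρ g)).symm) c) = 0 := hz
  rw [Submodule.Quotient.mk_eq_zero] at hz'
  obtain ⟨x', hx'⟩ := hz'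
  obtain ⟨x, rfl⟩ := Submodule.mkQ_surjective _ x'
  have hmem : ∀ g : G, ∃ t : M, a • t = c.1 g - (ρ g x - x) := by
    intro g
    have h1 : (smulTop a M).mkQ (ρ g x - x) = (smulTop a M).mkQ (c.1 g) := congrFun hx' g
    have h2 : c.1 g - (ρ g x - x) ∈ smulTop a M := by
      rw [← Submodule.ker_mkQ (smulTop a M), LinearMap.mem_ker, map_sub, h1, sub_self]
    obtain ⟨t, ht⟩ := h2
    exact ⟨t, ht⟩
  choose t ht using hmem
  have htc : t ∈ cocycles (fun g : G => ρ g) := by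
    intro g h
    apply ha
    have hc : c.1 (g * h) = c.1 g + ρ g (c.1 h) := c.2 g h
    simp only [smul_add, ← map_smul, ht, hc, map_sub, map_mul, Module.End.mul_apply]
    abel
  refine ⟨Submodule.mkQ _ ⟨t, htc⟩, ?_⟩
  rw [← map_smul, ← sub_eq_zero, ← map_sub, ← LinearMap.mem_ker, Submodule.ker_mkQ]
  refine ⟨x, funext fun g => ?_⟩
  change ρ g x - x = c.1 g - a • t g
  rw [ht, sub_sub_cancel]

/-- The `K`-span of an `R`-submodule with a basis of `s` elements has dimension at most `s`. -/
theorem finrank_span_le_of_basis {R K V : Type*} [CommRing R] [Field K] [Algebra R K]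
    [AddCommGroup V] [Module R V] [Module K V] [IsScalarTower R K V] {s : ℕ}
    (P : Submodule R V) (b : Module.Basis (Fin s) R P) :
    Module.finrank K (Submodule.span K (P : Set V)) ≤ s := by
  have hP : Submodule.span K (P : Set V) =
      Submodule.span K (Set.range fun i => (b i : V)) := by
    apply le_antisymm
    · rw [Submodule.span_le]
      intro v hv
      have h := congrArg P.subtype (b.sum_repr ⟨v, hv⟩)
      simp only [map_sum, map_smul, Submodule.subtype_apply] at h
      rw [← h]
      refine Submodule.sum_mem _ fun i _ => ?_
      rw [← algebraMap_smul K]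
      exact Submodule.smul_mem _ _ (Submodule.subset_span ⟨i, rfl⟩)
    · apply Submodule.span_mono
      rintro _ ⟨i, rfl⟩
      exact (b i).2
  rw [hP]
  exact (finrank_range_le_card _).trans_eq (Fintype.card_fin s)

/-- Let `p` be an odd prime, `G` a group, `T` a `G`-module, finite free over
`ℤ_p`, with `H¹(G,T)` finitely generated over `ℤ_p`.  Let `N ⊆ H¹(G,T)` be a saturated
`ℤ_p`-submodule (the preimage of a `ℚ_p`-subspace under `H¹(G,T) → H¹(G,T) ⊗ ℚ_p`) whose image
in `H¹(G,T) ⊗ ℚ_p` has dimension at least `r`.  Then for every `n ≥ 1` the image of `N` under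
`H¹(G,T) → H¹(G,T/pⁿT)` contains a free `ℤ/pⁿ`-submodule of rank `r`. -/
theorem statement8 (p : ℕ) [Fact p.Prime] (hodd : Odd p)
    {G : Type*} [Group G]
    {T : Type*} [AddCommGroup T] [Module ℤ_[p] T]
    [Module.Finite ℤ_[p] T] [Module.Free ℤ_[p] T]
    (ρ : G →* Module.End ℤ_[p] T)
    (hfg : Module.Finite ℤ_[p] (H1 (fun g : G => ρ g)))
    (N : Submodule ℤ_[p] (H1 (fun g : G => ρ g)))
    (hsat : ∃ W : Submodule ℚ_[p] (ℚ_[p] ⊗[ℤ_[p]] H1 (fun g : G => ρ g)),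
      N = Submodule.comap ((TensorProduct.mk ℤ_[p] ℚ_[p] (H1 (fun g : G => ρ g))) 1)
        (W.restrictScalars ℤ_[p]))
    (r : ℕ)
    (hdim : r ≤ Module.finrank ℚ_[p] (Submodule.span ℚ_[p]
      (((TensorProduct.mk ℤ_[p] ℚ_[p] (H1 (fun g : G => ρ g))) 1) '' (N : Set _)))) :
    ∀ n : ℕ, 1 ≤ n →
      ∃ f : Fin r → H1 (fun g : G => quotEnd ((p : ℤ_[p]) ^ n) (ρ g)),
        (∀ i : Fin r, f i ∈ Submodule.map (H1red ((p : ℤ_[p]) ^ n) (fun g : G => ρ g)) N) ∧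
        (∀ c : Fin r → ℤ_[p], (∑ i, c i • f i) = 0 →
          ∀ i : Fin r, ∃ d : ℤ_[p], c i = (p : ℤ_[p]) ^ n * d) := by
  intro n _
  obtain ⟨W, hW⟩ := hsat
  set φ := (TensorProduct.mk ℤ_[p] ℚ_[p] (H1 (fun g : G => ρ g))) 1
  have hp : (p : ℤ_[p]) ^ n ≠ 0 :=
    pow_ne_zero _ (Nat.cast_ne_zero.mpr (Fact.out : p.Prime).ne_zero)
  let P := N.map φ
  have : Module.Finite ℤ_[p] P := Module.Finite.map N φ
  have : Module.IsTorsionFree ℤ_[p] (ℚ_[p] ⊗[ℤ_[p]] H1 (fun g : G => ρ g)) :=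
    Module.IsTorsionFree.trans_faithfulSMul ℤ_[p] ℚ_[p] _
  let b := Module.finBasis ℤ_[p] P
  have hr : r ≤ Module.finrank ℤ_[p] P :=
    hdim.trans (finrank_span_le_of_basis (K := ℚ_[p]) P b)
  have hlift : ∀ i, ∃ x ∈ N, φ x = b i := fun i => (b i).2
  choose x hxN hx using hlift
  refine ⟨fun i => H1red ((p : ℤ_[p]) ^ n) (fun g : G => ρ g) (x (Fin.castLE hr i)),
    fun i => ⟨_, hxN _, rfl⟩, fun c hc i => ?_⟩
  obtain ⟨y, hy⟩ := exists_smul_eq_of_H1red_eq_zero ρ ((p : ℤ_[p]) ^ n)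
    (smul_right_injective T hp) (∑ i, c i • x (Fin.castLE hr i))
    (by simpa only [map_sum, map_smul] using hc)
  have hyN : y ∈ N := by
    have hmem : (p : ℤ_[p]) ^ n • y ∈ N :=
      hy ▸ Submodule.sum_mem _ fun i _ => Submodule.smul_mem _ _ (hxN _)
    rw [hW, Submodule.mem_comap, map_smul, Submodule.restrictScalars_mem,
      ← algebraMap_smul ℚ_[p]] at hmem
    rw [hW]
    exact (W.smul_mem_iff (by simpa using hp)).mp hmem
  have hP : ∑ i, c i • b (Fin.castLE hr i) =
      (p : ℤ_[p]) ^ n • (⟨φ y, y, hyN, rfl⟩ : P) := by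
    apply Subtype.ext
    simpa [hx] using congrArg φ hy
  refine ⟨b.repr ⟨φ y, y, hyN, rfl⟩ (Fin.castLE hr i), ?_⟩
  have hcoord := congrArg (fun v => b.repr v (Fin.castLE hr i)) hP
  simpa [Finsupp.single_apply, Fin.castLE_inj] using hcoord
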